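/- arXiv:2411.09446 — 4 statements merged into one kernel-verified Lean document; each statement's English description precedes it below -/
import Mathlib

section
/- Let $a, b \ge 2$ be relatively prime integers and $g = ab - a - b$. For every integer $s$ with $0 \le s \le g$, exactly one of $s$ and $g - s$ is representable as $ax + by$ with $x, y$ nonnegative integers. -/
/-!
If both `s` and `g - s` were representable, adding the two representations would give
`a * b = a * u + b * v` with `u, v ≥ 1`; coprimality forces `b ∣ u`, so the right side exceeds
`a * b`. Conversely, the Chinese remainder theorem gives `x < b` with `a * x ≡ s` modulo `b`.
If `a * x ≤ s`, then `s = a * x + b * k` is representable; otherwise `a * x = s + b * k` with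
`k ≥ 1`, and `g - s = a * (b - 1 - x) + b * (k - 1)`.
-/

/-- Sylvester's antisymmetry: for relatively prime `a, b ≥ 2` and `g = a*b - a - b`,
for every `0 ≤ s ≤ g` exactly one of `s` and `g - s` is representable as
`a*x + b*y` with `x, y` nonnegative integers. -/
theorem sylvester_antisymmetry
    (a b : ℕ) (ha : 2 ≤ a) (hb : 2 ≤ b) (hcop : Nat.Coprime a b)
    (s : ℕ) (hs : s ≤ a * b - a - b) :
    Xor' (∃ x y : ℕ, s = a * x + b * y)
      (∃ x y : ℕ, a * b - a - b - s = a * x + b * y) := by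
  -- This makes the truncated subtractions in the statement exact.
  have hab : a + b ≤ a * b := by nlinarith
  have not_both : ¬ ((∃ x y : ℕ, s = a * x + b * y) ∧
      (∃ x y : ℕ, a * b - a - b - s = a * x + b * y)) := by
    rintro ⟨⟨x, y, h⟩, ⟨x', y', h'⟩⟩
    have hsum : a * b = a * (x + x' + 1) + b * (y + y' + 1) := by
      have : a * b = (a * x + b * y) + (a * x' + b * y') + a + b := by omega
      rw [this]; ring
    have hdvd : b ∣ a * (x + x' + 1) :=
      (Nat.dvd_add_left (Dvd.intro _ rfl)).1 (hsum ▸ Dvd.intro_left a rfl)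
    have hle : b ≤ x + x' + 1 :=
      Nat.le_of_dvd (Nat.succ_pos _) (hcop.symm.dvd_of_dvd_mul_left hdvd)
    nlinarith [Nat.mul_le_mul_left a hle]
  have one : (∃ x y : ℕ, s = a * x + b * y) ∨
      (∃ x y : ℕ, a * b - a - b - s = a * x + b * y) := by
    obtain ⟨x, hx, hmod⟩ : ∃ x < b, a * x ≡ s [MOD b] := by
      have hlt := Nat.chineseRemainder_lt_mul hcop 0 s (by omega) (by omega)
      generalize Nat.chineseRemainder hcop 0 s = r at hlt
      obtain ⟨n, hn0, hns⟩ := r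
      obtain ⟨x, rfl⟩ := (Nat.modEq_zero_iff_dvd).1 hn0
      exact ⟨x, Nat.lt_of_mul_lt_mul_left hlt, hns⟩
    rcases le_or_gt (a * x) s with h | h
    · obtain ⟨k, hk⟩ := (Nat.modEq_iff_dvd' h).1 hmod
      exact Or.inl ⟨x, k, by omega⟩
    · obtain ⟨k, hk⟩ := (Nat.modEq_iff_dvd' h.le).1 hmod.symm
      obtain ⟨k, rfl⟩ : ∃ j, k = j + 1 :=
        Nat.exists_eq_succ_of_ne_zero (by rintro rfl; omega)
      obtain ⟨d, rfl⟩ := Nat.exists_eq_add_of_lt hx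
      refine Or.inr ⟨d, k, ?_⟩
      have h1 : a * (x + d + 1) = a * x + a * d + a := by ring
      have h2 : (x + d + 1) * (k + 1) = (x + d + 1) * k + (x + d + 1) := by ring
      omega
  rcases one with h | h
  · exact Or.inl ⟨h, fun h' => not_both ⟨h, h'⟩⟩
  · exact Or.inr ⟨h, fun h' => not_both ⟨h', h⟩⟩
end

section
/- Let $a < b$ be relatively prime positive integers, $g = ab - a - b$, and let $c$ be a real number with $0 \le c < g$. Then the number of integers $n \in [0, c]$ that are representable as $ax + by$ with nonnegative integers $x, y$ equals $\sum_{y=0}^{\lfloor c/b \rfloor} \left( \left\lfloor \frac{c - by}{a} \right\rfloor + 1 \right)$. -/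
/-! A representation `n = a * x + b * y` with `n < a * b` is unique: `y < a`, and `y` is determined
modulo `a` because `b` is invertible there (`repr_unique`). Since `c < a * b`, counting representable
`n ≤ c` amounts to counting the lattice points `(y, x)` with `x, y ≥ 0` and `a * x + b * y ≤ c`, and
the sum does so one row `y` at a time. -/

theorem repr_unique {a b x y x' y' : ℕ} (ha : 0 < a) (hcop : Nat.Coprime a b)
    (hlt : a * x + b * y < a * b) (h : a * x + b * y = a * x' + b * y') :
    y = y' ∧ x = x' := by
  have hy : y < a := by
    by_contra! hc
    nlinarith [Nat.mul_le_mul_left b hc, Nat.zero_le (a * x)]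
  have hy' : y' < a := by
    by_contra! hc
    nlinarith [Nat.mul_le_mul_left b hc, Nat.zero_le (a * x')]
  have hmod : b * y ≡ b * y' [MOD a] := by
    have h1 : (a * x + b * y) % a = (a * x' + b * y') % a := by rw [h]
    simpa [Nat.ModEq, Nat.mul_add_mod] using h1
  have hyy : y = y' :=
    (Nat.ModEq.cancel_left_of_coprime hcop hmod).eq_of_lt_of_lt hy hy'
  subst hyy
  exact ⟨rfl, Nat.eq_of_mul_eq_mul_left ha (by omega)⟩

/-- The index ranges of the double sum cut out exactly the lattice points below the line
`a * x + b * y = c`. -/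
theorem mem_ranges_iff {a b : ℕ} (ha : 0 < a) (hb : 0 < b) {c : ℝ} (hc0 : 0 ≤ c) (x y : ℕ) :
    (y < ⌊c / (b : ℝ)⌋₊ + 1 ∧ x < ⌊(c - (b : ℝ) * y) / (a : ℝ)⌋₊ + 1) ↔
      ((a * x + b * y : ℕ) : ℝ) ≤ c := by
  have ha' : (0 : ℝ) < a := by exact_mod_cast ha
  have hb' : (0 : ℝ) < b := by exact_mod_cast hb
  have hax : (0 : ℝ) ≤ a * x := by positivity
  have hy : y < ⌊c / (b : ℝ)⌋₊ + 1 ↔ (b : ℝ) * y ≤ c := by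
    rw [Nat.lt_succ_iff, Nat.le_floor_iff (by positivity), le_div_iff₀ hb', mul_comm]
  -- The bound on `y` makes `(c - b * y) / a` nonnegative, so its natural floor is the true floor.
  have hx (h : (b : ℝ) * y ≤ c) :
      x < ⌊(c - (b : ℝ) * y) / (a : ℝ)⌋₊ + 1 ↔ (a : ℝ) * x ≤ c - b * y := by
    rw [Nat.lt_succ_iff, Nat.le_floor_iff (div_nonneg (by linarith) ha'.le), le_div_iff₀ ha',
      mul_comm]
  rw [hy]
  push_cast
  constructor
  · rintro ⟨h1, h2⟩
    linarith [(hx h1).1 h2]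
  · intro h
    have h1 : (b : ℝ) * y ≤ c := by linarith
    exact ⟨h1, (hx h1).2 (by linarith)⟩


/-- For relatively prime positive integers `a < b`, `g = a*b - a - b`, and a real
`0 ≤ c < g`, the number of integers `n ∈ [0, c]` representable as `a*x + b*y`
with nonnegative `x, y` equals `∑_{y=0}^{⌊c/b⌋} (⌊(c - b*y)/a⌋ + 1)`. -/
theorem count_representable_initial_segment
    (a b : ℕ) (ha : 0 < a) (hab : a < b) (hcop : Nat.Coprime a b)
    (c : ℝ) (hc0 : 0 ≤ c) (hcg : c < (a * b - a - b : ℕ)) :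
    {n : ℕ | (n : ℝ) ≤ c ∧ ∃ x y : ℕ, n = a * x + b * y}.ncard =
      ∑ y ∈ Finset.range (⌊c / (b : ℝ)⌋₊ + 1), (⌊(c - (b : ℝ) * y) / (a : ℝ)⌋₊ + 1) := by
  classical
  have hb : 0 < b := ha.trans hab
  have hcab : c < ((a * b : ℕ) : ℝ) :=
    hcg.trans_le (by exact_mod_cast (Nat.sub_le _ _).trans (Nat.sub_le _ _))
  set S : Finset (Σ _ : ℕ, ℕ) := (Finset.range (⌊c / (b : ℝ)⌋₊ + 1)).sigma
    fun y => Finset.range (⌊(c - (b : ℝ) * y) / (a : ℝ)⌋₊ + 1) with hS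
  have hmem (p : Σ _ : ℕ, ℕ) : p ∈ S ↔ ((a * p.2 + b * p.1 : ℕ) : ℝ) ≤ c := by
    rw [hS, Finset.mem_sigma, Finset.mem_range, Finset.mem_range]
    exact mem_ranges_iff ha hb hc0 p.2 p.1
  have himg : {n : ℕ | (n : ℝ) ≤ c ∧ ∃ x y : ℕ, n = a * x + b * y} =
      (S.image fun p => a * p.2 + b * p.1 : Finset ℕ) := by
    ext n
    simp only [Set.mem_ofPred_eq, Finset.coe_image, Set.mem_image, Finset.mem_coe]
    constructor
    · rintro ⟨hn, x, y, rfl⟩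
      exact ⟨⟨y, x⟩, (hmem _).2 hn, rfl⟩
    · rintro ⟨p, hp, rfl⟩
      exact ⟨(hmem p).1 hp, p.2, p.1, rfl⟩
  have hinj : Set.InjOn (fun p : Σ _ : ℕ, ℕ => a * p.2 + b * p.1) S := by
    rintro ⟨y, x⟩ hp ⟨y', x'⟩ _ h
    have hlt : a * x + b * y < a * b := by
      exact_mod_cast ((hmem ⟨y, x⟩).1 hp).trans_lt hcab
    obtain ⟨rfl, rfl⟩ := repr_unique ha hcop hlt h
    rfl
  rw [himg, Set.ncard_coe_finset, Finset.card_image_of_injOn hinj, hS, Finset.card_sigma]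
  simp only [Finset.card_range]
end

section
/- Let $a < b$ be relatively prime positive integers, $g = ab - a - b$, and let $c$ be a real number with $0 \le c < g$. Then $\pi_{a,b} \ge \pi(g) - \pi(g - c) - \sum_{y=0}^{\lfloor c/b \rfloor} \left( \left\lfloor \frac{c - by}{a} \right\rfloor + 1 \right)$, where the right-hand side is a lower bound for the number of representable primes in $(g - c, g]$. -/
/-!
By Sylvester's symmetry, if `n` is not representable then `g - n` is. Hence every non-representable
prime in `(g - c, g]` has the form `g - (a * x + b * y)` with `x, y ≥ 0` and `a * x + b * y < c`,
and there are at most `∑_{y ≤ c/b} (⌊(c - b*y)/a⌋ + 1)` such pairs `(x, y)`.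
-/

/-- Sylvester's symmetry: if `n` is not representable by `a` and `b`, then
`a * b - a - b - n` is. The identity is written additively to avoid truncated subtraction. -/
lemma exists_add_eq_mul_of_not_representable {a b n : ℕ} (ha : 0 < a) (hb : 0 < b)
    (hcop : Nat.Coprime a b) (hn : ¬ ∃ x y : ℕ, n = a * x + b * y) :
    ∃ x y : ℕ, n + (a * x + b * y) + a + b = a * b := by
  -- Choose `0 ≤ t < b` with `a * t ≡ n [MOD b]`.
  have hlt := Nat.chineseRemainder_lt_mul hcop 0 n ha.ne' hb.ne'
  obtain ⟨hk0, hkn⟩ := (Nat.chineseRemainder hcop 0 n).2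
  generalize ((Nat.chineseRemainder hcop 0 n : _) : ℕ) = k at hlt hk0 hkn
  obtain ⟨t, rfl⟩ := (Nat.modEq_zero_iff_dvd).1 hk0
  have ht : t < b := lt_of_mul_lt_mul_left hlt ha.le
  rcases le_or_gt (a * t) n with h | h
  · obtain ⟨s, hs⟩ := (Nat.modEq_iff_dvd' h).1 hkn
    exact absurd ⟨t, s, by omega⟩ hn
  · obtain ⟨s, hs⟩ := (Nat.modEq_iff_dvd' h.le).1 hkn.symm
    obtain ⟨u, rfl⟩ := Nat.exists_eq_add_of_lt ht
    cases s with
    | zero => omega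
    | succ s =>
      refine ⟨u, s, ?_⟩
      have h1 : a * t = n + (t + u + 1) * (s + 1) := by omega
      linear_combination -h1

/-- For relatively prime positive integers `a < b`, `g = a*b - a - b`, and a real
`0 ≤ c < g`, the number `π_{a,b}` of representable primes `p ≤ g` satisfies
`π_{a,b} ≥ π(g) - π(g - c) - ∑_{y=0}^{⌊c/b⌋} (⌊(c - b*y)/a⌋ + 1)`. -/
theorem representable_primes_lower_bound
    (a b : ℕ) (ha : 0 < a) (hab : a < b) (hcop : Nat.Coprime a b)
    (c : ℝ) (hc0 : 0 ≤ c) (hcg : c < (a * b - a - b : ℕ)) :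
    ({p : ℕ | p.Prime ∧ p ≤ a * b - a - b ∧ ∃ x y : ℕ, p = a * x + b * y}.ncard : ℝ) ≥
      (Nat.primeCounting (a * b - a - b) : ℝ) -
        (Nat.primeCounting ⌊((a * b - a - b : ℕ) : ℝ) - c⌋₊ : ℝ) -
        ∑ y ∈ Finset.range (⌊c / (b : ℝ)⌋₊ + 1),
          ((⌊(c - (b : ℝ) * y) / (a : ℝ)⌋₊ : ℝ) + 1) := by
  classical
  set g := a * b - a - b with hg
  set m := ⌊(g : ℝ) - c⌋₊ with hm
  set S := {p : ℕ | p.Prime ∧ p ≤ g ∧ ∃ x y : ℕ, p = a * x + b * y} with hS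
  have hSfin : S.Finite := (Set.finite_Iic g).subset fun p hp => hp.2.1
  set T : Finset (Σ _ : ℕ, ℕ) := (Finset.range (⌊c / (b : ℝ)⌋₊ + 1)).sigma
    fun y => Finset.range (⌊(c - (b : ℝ) * y) / (a : ℝ)⌋₊ + 1) with hT
  have ha' : (0 : ℝ) < a := by exact_mod_cast ha
  have hb' : (0 : ℝ) < b := by exact_mod_cast ha.trans hab
  have hsub : (Finset.range (g + 1)).filter Nat.Prime ⊆
      ((Finset.range (m + 1)).filter Nat.Prime ∪ hSfin.toFinset) ∪
        T.image fun q => g - (a * q.2 + b * q.1) := by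
    intro p hp
    rw [Finset.mem_filter, Finset.mem_range] at hp
    obtain ⟨hpg, hpp⟩ := hp
    by_cases hpm : p < m + 1
    · simp [hpm, hpp]
    by_cases hrep : ∃ x y : ℕ, p = a * x + b * y
    · have : p ∈ S := ⟨hpp, by omega, hrep⟩
      simp [this]
    obtain ⟨x, y, hxy⟩ := exists_add_eq_mul_of_not_representable ha (ha.trans hab) hcop hrep
    have hgp : g = p + (a * x + b * y) := by omega
    have hlt : (g : ℝ) - c < p := (Nat.floor_lt' hpp.ne_zero).1 (by omega)
    have hc : (a : ℝ) * x + b * y < c := by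
      rw [hgp] at hlt
      push_cast at hlt
      linarith
    refine Finset.mem_union_right _ (Finset.mem_image.2 ⟨⟨y, x⟩, ?_, by simp only; omega⟩)
    rw [hT, Finset.mem_sigma, Finset.mem_range, Finset.mem_range, Nat.lt_succ_iff, Nat.lt_succ_iff]
    have hx0 : (0 : ℝ) ≤ a * x := by positivity
    refine ⟨Nat.le_floor ?_, Nat.le_floor ?_⟩
    · rw [le_div_iff₀ hb']
      dsimp only
      linarith
    · rw [le_div_iff₀ ha']
      dsimp only
      linarith
  have hcard := (Finset.card_le_card hsub).trans <| (Finset.card_union_le _ _).trans <|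
    add_le_add (Finset.card_union_le _ _) Finset.card_image_le
  rw [← Set.ncard_eq_toFinset_card S hSfin, ← Nat.count_eq_card_filter_range,
    ← Nat.count_eq_card_filter_range, hT, Finset.card_sigma] at hcard
  simp only [Finset.card_range] at hcard
  have hfin : (Nat.primeCounting g : ℝ) ≤ Nat.primeCounting m + S.ncard +
      ∑ y ∈ Finset.range (⌊c / (b : ℝ)⌋₊ + 1),
        ((⌊(c - (b : ℝ) * y) / (a : ℝ)⌋₊ : ℝ) + 1) := by
    exact_mod_cast hcard
  linarith
end

section
/- For every real $g > 10^{18}$ one has $\frac{g - g/\log g}{\log(g - g/\log g) - 1 - (\log(g - g/\log g))^{-0.5}} < \frac{g}{\log g}\left(1 - \frac{1}{\log g}\right)\left(1 + \frac{5}{4\log g}\right)$. -/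
/-!
Put `L = log g > 41` and `y = log (g - g / L) = L + log (1 - 1/L)`. Dividing by the positive
factor `g (1 - 1/L)`, the claim becomes `L < (y - 1 - y ^ (-1/2)) (1 + 5/(4L))`. Two crude bounds
suffice: `y ≥ L - 1/(L - 1)`, from `log t ≥ 1 - 1/t`, and `y ^ (-1/2) ≤ 4/25`, from
`y ≥ (25/4) ^ 2`. To leading order the right side exceeds `L` by `5/4 - 1 - 4/25 = 9/100`, and the
remaining terms, of order `1/L`, are smaller than this once `L > 41`.
-/

theorem log_gt_of_gt_ten_pow {g : ℝ} (hg : 10 ^ 18 < g) : 41 < Real.log g := by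
  rw [Real.lt_log_iff_exp_lt (by linarith [show (0 : ℝ) < 10 ^ 18 by positivity])]
  calc Real.exp 41 = Real.exp 1 ^ 41 := by rw [← Real.exp_nat_mul]; norm_num
    _ ≤ 2.7182818286 ^ 41 := by
        gcongr
        exact Real.exp_one_lt_d9.le
    _ < 10 ^ 18 := by norm_num
    _ < g := hg

theorem rpow_neg_half_le {y : ℝ} (hy : 625 / 16 ≤ y) : y ^ (-(0.5 : ℝ)) ≤ 4 / 25 := by
  have h : (25 / 4 : ℝ) ≤ √y := Real.le_sqrt_of_sq_le (by linarith)
  rw [Real.rpow_neg (by linarith), show (0.5 : ℝ) = 1 / 2 by norm_num, ← Real.sqrt_eq_rpow]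
  exact (inv_anti₀ (by norm_num) h).trans (by norm_num)

/-- The inequality in `L = log g` that is left after both logarithmic terms are estimated. -/
theorem lt_mul_of_gt {L : ℝ} (hL : 41 < L) :
    L < (L - 1 / (L - 1) - 1 - 4 / 25) * (1 + 5 / (4 * L)) := by
  have h0 : 0 < L := by linarith
  have h1 : 0 < L - 1 := by linarith
  rw [← sub_pos]
  have : (L - 1 / (L - 1) - 1 - 4 / 25) * (1 + 5 / (4 * L)) - L
      = (9 * L ^ 2 - 254 * L + 20) / (100 * L * (L - 1)) := by
    field_simp
    ring
  rw [this]
  apply div_pos <;> nlinarith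

/-- For `g > 10^18`,
`(g - g/log g) / (log(g - g/log g) - 1 - (log(g - g/log g))^(-1/2))
  < (g/log g)(1 - 1/log g)(1 + 5/(4 log g))`. -/
theorem taylor_upper_bound_pi_ratio (g : ℝ) (hg : 10 ^ 18 < g) :
    (g - g / Real.log g) /
        (Real.log (g - g / Real.log g) - 1 -
          Real.log (g - g / Real.log g) ^ (-(0.5 : ℝ))) <
      g / Real.log g * (1 - 1 / Real.log g) * (1 + 5 / (4 * Real.log g)) := by
  have hL := log_gt_of_gt_ten_pow hg
  have hg0 : 0 < g := lt_trans (by positivity) hg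
  set L := Real.log g with hLdef
  have h0 : 0 < L := by linarith
  have h1 : 0 < L - 1 := by linarith
  have ht : 0 < 1 - 1 / L := by
    rw [one_sub_div h0.ne']
    positivity
  have hx : g - g / L = g * (1 - 1 / L) := by ring
  have hy : L - 1 / (L - 1) ≤ Real.log (g - g / L) := by
    rw [hx, Real.log_mul hg0.ne' ht.ne', ← hLdef]
    have h := Real.one_sub_inv_le_log_of_pos ht
    have e : 1 - (1 - 1 / L)⁻¹ = -(1 / (L - 1)) := by
      rw [one_sub_div h0.ne', inv_div]
      field_simp
      ring
    linarith
  have hsmall : 1 / (L - 1) ≤ 1 := by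
    rw [div_le_one h1]
    linarith
  have hs := rpow_neg_half_le (y := Real.log (g - g / L)) (by linarith)
  have hD : L - 1 / (L - 1) - 1 - 4 / 25 ≤
      Real.log (g - g / L) - 1 - Real.log (g - g / L) ^ (-(0.5 : ℝ)) := by linarith
  have key := (lt_mul_of_gt hL).trans_le
    (mul_le_mul_of_nonneg_right hD (by positivity : 0 ≤ 1 + 5 / (4 * L)))
  have hDpos : 0 < L - 1 / (L - 1) - 1 - 4 / 25 := by linarith
  generalize Real.log (g - g / L) - 1 - Real.log (g - g / L) ^ (-(0.5 : ℝ)) = D at hD key ⊢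
  rw [div_lt_iff₀ (hDpos.trans_le hD), hx]
  calc g * (1 - 1 / L) = g * (1 - 1 / L) / L * L := by field_simp
    _ < g * (1 - 1 / L) / L * (D * (1 + 5 / (4 * L))) := by gcongr
    _ = g / L * (1 - 1 / L) * (1 + 5 / (4 * L)) * D := by ring
end
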